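/- Let G be a finite group and let B be a commutative ring whose underlying additive group is torsion-free (i.e., n•b = 0 with n ≥ 1 implies b = 0). Then the ghost map φ : W_G(B) → ∏_{K ≤ G} B, whose K-th component is φ_K(x) = Σ_{[H]} |(G/H)^K| · x_H^{|H|/|K|}, the sum running over a set of representatives of the conjugacy classes of subgroups H of G, is injective. -/

import Mathlib

theorem aux_conj_le {G : Type*} [Group G] (K H : Subgroup G)
    (h : (MulAction.fixedPoints K (G ⧸ H)).Nonempty) :
    ∃ g : G, Subgroup.map (MulAut.conj g).toMonoidHom K ≤ H := by
  obtain ⟨q, hq⟩ := h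
  induction q using QuotientGroup.induction_on with
  | H g =>
    refine ⟨g⁻¹, ?_⟩
    rintro _ ⟨k, hk, rfl⟩
    have h1 : ((k * g : G) : G ⧸ H) = (g : G ⧸ H) := hq ⟨k, hk⟩
    have h2 := QuotientGroup.eq.1 h1.symm
    simpa [mul_assoc] using h2

theorem aux_card_map {G : Type*} [Group G] (K : Subgroup G) (g : G) :
    Nat.card (Subgroup.map (MulAut.conj g).toMonoidHom K) = Nat.card K :=
  Subgroup.card_map_of_injective (MulAut.conj g).injective

theorem aux_self {G : Type*} [Group G] (K : Subgroup G) :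
    (MulAction.fixedPoints K (G ⧸ K)).Nonempty := by
  refine ⟨((1 : G) : G ⧸ K), ?_⟩
  rintro ⟨k, hk⟩
  change ((k * 1 : G) : G ⧸ K) = ((1 : G) : G ⧸ K)
  rw [eq_comm, QuotientGroup.eq]
  simpa using hk

/-- For a finite group `G` and a commutative ring `B` whose additive group
is torsion-free, the ghost map `W_G(B) → ∏_{K ≤ G} B`, whose `K`-th component is
`x ↦ Σ_{[H]} |(G/H)^K| · x_H^{|H|/|K|}` (the sum over a set `R` of representatives of the
conjugacy classes of subgroups of `G`), is injective on the set of conjugation-invariant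
families `x = (x_H)_H`. -/
theorem stmt6 (G : Type*) [Group G] [Finite G] (B : Type*) [CommRing B]
    (htf : ∀ n : ℕ, n ≠ 0 → ∀ b : B, n • b = 0 → b = 0)
    (R : Finset (Subgroup G))
    (hR : ∀ H : Subgroup G, ∃! H' : Subgroup G,
      H' ∈ R ∧ ∃ g : G, Subgroup.map (MulAut.conj g).toMonoidHom H = H') :
    Function.Injective
      (fun (x : {x : Subgroup G → B //
          ∀ (g : G) (H : Subgroup G), x (Subgroup.map (MulAut.conj g).toMonoidHom H) = x H})
        (K : Subgroup G) =>
        ∑ H ∈ R, (Nat.card (MulAction.fixedPoints K (G ⧸ H)) : B) *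
          x.1 H ^ (Nat.card H / Nat.card K)) := by
  classical
  intro x y hxy
  apply Subtype.ext
  funext K
  induction hn : Nat.card G - Nat.card K using Nat.strong_induction_on generalizing K with
  | _ n ih =>
  obtain ⟨K₀, ⟨hK₀R, g₀, hg₀⟩, -⟩ := hR K
  have hcard : Nat.card K₀ = Nat.card K := by rw [← hg₀, aux_card_map]
  rw [← x.2 g₀ K, ← y.2 g₀ K, hg₀]
  have hs := congrFun hxy K₀
  simp only at hs
  rw [← Finset.add_sum_erase R _ hK₀R, ← Finset.add_sum_erase R _ hK₀R] at hs
  have hrest : ∀ H ∈ R.erase K₀,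
      (Nat.card (MulAction.fixedPoints K₀ (G ⧸ H)) : B) * x.1 H ^ (Nat.card H / Nat.card K₀) =
      (Nat.card (MulAction.fixedPoints K₀ (G ⧸ H)) : B) * y.1 H ^ (Nat.card H / Nat.card K₀) := by
    intro H hH
    obtain ⟨hne, hHR⟩ := Finset.mem_erase.1 hH
    by_cases hfix : (MulAction.fixedPoints K₀ (G ⧸ H)).Nonempty
    · obtain ⟨g, hg⟩ := aux_conj_le K₀ H hfix
      have hle : Nat.card K₀ ≤ Nat.card H := by
        rw [← aux_card_map K₀ g]
        exact Subgroup.card_le_of_le hg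
      have hlt : Nat.card K₀ < Nat.card H := by
        refine lt_of_le_of_ne hle fun heq => hne ?_
        have hEq : Subgroup.map (MulAut.conj g).toMonoidHom K₀ = H :=
          Subgroup.eq_of_le_of_card_ge hg (by rw [aux_card_map, heq])
        refine (hR K₀).unique ⟨hHR, g, hEq⟩ ⟨hK₀R, 1, ?_⟩
        ext a
        simp
      have hHG : Nat.card H ≤ Nat.card G := Subgroup.card_le_card_group H
      rw [ih (Nat.card G - Nat.card H) (by omega) H rfl]
    · rw [Set.not_nonempty_iff_eq_empty.1 hfix]
      simp
  rw [Finset.sum_congr rfl hrest] at hs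
  have hs' := add_right_cancel hs
  rw [Nat.div_self Nat.card_pos, pow_one, pow_one] at hs'
  have hne : Nat.card (MulAction.fixedPoints K₀ (G ⧸ K₀)) ≠ 0 := by
    have := (aux_self K₀).to_subtype
    exact Nat.card_pos.ne'
  refine sub_eq_zero.1 (htf _ hne _ ?_)
  rw [nsmul_eq_mul, mul_sub, hs', sub_self]
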